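/- (Set-theoretic Drinfeld twist.) Let X be a set, let T : X × X → X × X be a bijection satisfying the braid equation, let F : X × X → X × X be a bijection, and let Φ, Ψ be bijections of X × X × X such that F₁₂ ∘ Ψ = F₂₃ ∘ Φ, Φ ∘ T₂₃ = T₂₃ ∘ Φ, and Ψ ∘ T₁₂ = T₁₂ ∘ Ψ. Then the twisted maps R₁₂ := F₁₂ ∘ T₁₂ ∘ F₁₂⁻¹ and R₂₃ := F₂₃ ∘ T₂₃ ∘ F₂₃⁻¹ satisfy the braid relation R₁₂ ∘ R₂₃ ∘ R₁₂ = R₂₃ ∘ R₁₂ ∘ R₂₃ on X × X × X. -/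

import Mathlib

/-! The map `G = F₁₂ ∘ Ψ = F₂₃ ∘ Φ` intertwines `T₁₂` with `R₁₂` by its first expression, since `Ψ`
commutes with `T₁₂`, and `T₂₃` with `R₂₃` by its second, since `Φ` commutes with `T₂₃`. As `G` is
surjective, it carries the braid relation of `T₁₂, T₂₃` over to `R₁₂, R₂₃`. -/

/-- Lift of a map on the factors (1,2) of a triple product. -/
def lift12 {X Y Z : Type*} (T : X × Y → X × Y) : X × Y × Z → X × Y × Z :=
  fun (x, y, z) => ((T (x, y)).1, (T (x, y)).2, z)

/-- Lift of a map on the factors (2,3) of a triple product. -/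
def lift23 {X Y Z : Type*} (T : Y × Z → Y × Z) : X × Y × Z → X × Y × Z :=
  fun (x, y, z) => (x, (T (y, z)).1, (T (y, z)).2)

/-- `S` satisfies the braid equation. -/
def IsBraid {X : Type*} (S : X × X → X × X) : Prop :=
  lift12 (X := X) (Y := X) (Z := X) S ∘ lift23 S ∘ lift12 S =
    lift23 (X := X) (Y := X) (Z := X) S ∘ lift12 S ∘ lift23 S

theorem braid_of_semiconj {A B : Type*} {G : A → B} {s t : A → A} {s' t' : B → B}
    (hG : Function.Surjective G) (hs : Function.Semiconj G s s') (ht : Function.Semiconj G t t')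
    (hst : s ∘ t ∘ s = t ∘ s ∘ t) : s' ∘ t' ∘ s' = t' ∘ s' ∘ t' := by
  apply hG.injective_comp_right
  calc (s' ∘ t' ∘ s') ∘ G
    _ = G ∘ (s ∘ t ∘ s) := (hs.comp_right (ht.comp_right hs)).comp_eq.symm
    _ = G ∘ (t ∘ s ∘ t) := by rw [hst]
    _ = (t' ∘ s' ∘ t') ∘ G := (ht.comp_right (hs.comp_right ht)).comp_eq

theorem drinfeld_twist_set_general {A B : Type*} {s t φ ψ : A → A} (f g : A ≃ B)
    (hst : s ∘ t ∘ s = t ∘ s ∘ t) (hψ : Function.Surjective ψ) (hfg : f ∘ ψ = g ∘ φ)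
    (hφt : Function.Commute φ t) (hψs : Function.Commute ψ s) :
    f.conj s ∘ g.conj t ∘ f.conj s = g.conj t ∘ f.conj s ∘ g.conj t := by
  have hs : Function.Semiconj (f ∘ ψ) s (f.conj s) := (f.semiconj_conj s).comp_left hψs
  have ht : Function.Semiconj (f ∘ ψ) t (g.conj t) := hfg ▸ (g.semiconj_conj t).comp_left hφt
  exact braid_of_semiconj (f.surjective.comp hψ) hs ht hst

section Lift

variable {X Y Z : Type*}

theorem lift12_leftInverse {F G : X × Y → X × Y} (h : Function.LeftInverse G F) :
    Function.LeftInverse (lift12 (Z := Z) G) (lift12 F) := fun ⟨x, y, z⟩ => by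
  simp only [lift12, Prod.mk.eta, h (x, y)]

theorem lift23_leftInverse {F G : Y × Z → Y × Z} (h : Function.LeftInverse G F) :
    Function.LeftInverse (lift23 (X := X) G) (lift23 F) := fun ⟨x, y, z⟩ => by
  simp only [lift23, Prod.mk.eta, h (y, z)]

/-- The permutation `F₁₂` of a triple product induced by a permutation `F` of the product of its
first two factors, with underlying map `lift12 F` and inverse `lift12 F.symm`. -/
def lift12Equiv (F : X × Y ≃ X × Y) : X × Y × Z ≃ X × Y × Z where
  toFun := lift12 F
  invFun := lift12 F.symm
  left_inv := lift12_leftInverse F.left_inv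
  right_inv := lift12_leftInverse F.right_inv

/-- The permutation `F₂₃` of a triple product induced by a permutation `F` of the product of its
last two factors, with underlying map `lift23 F` and inverse `lift23 F.symm`. -/
def lift23Equiv (F : Y × Z ≃ Y × Z) : X × Y × Z ≃ X × Y × Z where
  toFun := lift23 F
  invFun := lift23 F.symm
  left_inv := lift23_leftInverse F.left_inv
  right_inv := lift23_leftInverse F.right_inv

end Lift

/-- Set-theoretic Drinfeld twist: if `T` is a bijective solution of the braid equation,
`F` is a bijection of `X × X`, and `Φ, Ψ` are bijections of `X × X × X` such that
`F₁₂ ∘ Ψ = F₂₃ ∘ Φ`, `Φ ∘ T₂₃ = T₂₃ ∘ Φ` and `Ψ ∘ T₁₂ = T₁₂ ∘ Ψ`, then the twisted maps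
`R₁₂ = F₁₂ ∘ T₁₂ ∘ F₁₂⁻¹` and `R₂₃ = F₂₃ ∘ T₂₃ ∘ F₂₃⁻¹` satisfy the braid relation. -/
theorem drinfeld_twist_set {X : Type*} (T : X × X → X × X)
    (hTbij : Function.Bijective T) (hT : IsBraid T)
    (F : (X × X) ≃ (X × X)) (Φ Ψ : X × X × X → X × X × X)
    (hΦbij : Function.Bijective Φ) (hΨbij : Function.Bijective Ψ)
    (h1 : lift12 (X := X) (Y := X) (Z := X) ⇑F ∘ Ψ = lift23 (X := X) (Y := X) (Z := X) ⇑F ∘ Φ)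
    (h2 : Φ ∘ lift23 (X := X) (Y := X) (Z := X) T = lift23 (X := X) (Y := X) (Z := X) T ∘ Φ)
    (h3 : Ψ ∘ lift12 (X := X) (Y := X) (Z := X) T = lift12 (X := X) (Y := X) (Z := X) T ∘ Ψ) :
    (lift12 (X := X) (Y := X) (Z := X) ⇑F ∘ lift12 T ∘ lift12 ⇑F.symm) ∘
        (lift23 (X := X) (Y := X) (Z := X) ⇑F ∘ lift23 T ∘ lift23 ⇑F.symm) ∘
        (lift12 (X := X) (Y := X) (Z := X) ⇑F ∘ lift12 T ∘ lift12 ⇑F.symm) =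
      (lift23 (X := X) (Y := X) (Z := X) ⇑F ∘ lift23 T ∘ lift23 ⇑F.symm) ∘
        (lift12 (X := X) (Y := X) (Z := X) ⇑F ∘ lift12 T ∘ lift12 ⇑F.symm) ∘
        (lift23 (X := X) (Y := X) (Z := X) ⇑F ∘ lift23 T ∘ lift23 ⇑F.symm) :=
  drinfeld_twist_set_general (lift12Equiv F) (lift23Equiv F) hT hΨbij.surjective h1
    (Function.semiconj_iff_comp_eq.2 h2) (Function.semiconj_iff_comp_eq.2 h3)
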